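/- arXiv:2211.09989 — 7 statements merged into one kernel-verified Lean document; each statement's English description precedes it below -/
import Mathlib

section
/- There exists a group G such that G is finitely generated, G is infinite, and every element of G has finite order. -/
/-!
The vertices of the `p`-regular rooted tree are the words over `ZMod p`. Let `a` be the rotation
`x ↦ x + 1` of the first letter, and let `t` be the automorphism that fixes the first letter, acts
by `a ^ ε x` below each first-level vertex `x ≠ 0`, and acts as `t` itself below `0`.

*Torsion.* Let `w` be a word in `t` and the powers of `a`, with `n` letters `t`. Its sections at
the first-level vertices are again such words, and each `t` of `w` puts a `t` in exactly one of
them; so their numbers of `t` add up to `n`, and their rotation amounts add up to `0` as soon as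
the values `ε x` with `x ≠ 0` do. If `w` fixes the first level, then either all sections have fewer
than `n` letters `t`, or `w` is conjugate to `t ^ n`. Otherwise `w` permutes the first level
cyclically, and each section of `w ^ p` is a product of all sections of `w`: it has `n` letters `t`
and fixes the first level.

*Infinity.* If `x ≠ 0` and `ε x ≠ 0`, every element of `⟨a, t⟩` is the section at `x` of an
element of `⟨a, t⟩` fixing `x`, whereas `a` moves `x`; so a proper subgroup of `⟨a, t⟩`
maps onto `⟨a, t⟩`.
-/

open Equiv Finset

lemma exists_pow_pow_eq_one_pi {ι : Type*} [Finite ι] {M : ι → Type*} [∀ i, Monoid (M i)] {p : ℕ}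
    {s : ∀ i, M i} (h : ∀ i, ∃ k, s i ^ p ^ k = 1) : ∃ k, s ^ p ^ k = 1 := by
  choose k hk using h
  obtain ⟨K, hK⟩ := (Set.finite_range k).bddAbove
  exact ⟨K, funext fun i => by
    obtain ⟨m, hm⟩ := pow_dvd_pow p (hK ⟨i, rfl⟩)
    rw [Pi.pow_apply, hm, pow_mul, hk, one_pow, Pi.one_apply]⟩

lemma sum_range_add_nsmul_zmod {p : ℕ} [Fact p.Prime] {M : Type*} [AddCommMonoid M] {e : ZMod p}
    (he : e ≠ 0) (x : ZMod p) (f : ZMod p → M) :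
    ∑ i ∈ range p, f (x + i • e) = ∑ y, f y := by
  refine sum_nbij (fun i => x + i • e) (by simp) ?_ ?_ (by simp)
  · intro i hi j hj hij
    have hcast : (i : ZMod p) = j := by simpa [he] using hij
    rw [ZMod.natCast_eq_natCast_iff'] at hcast
    rwa [Nat.mod_eq_of_lt (by simpa using hi), Nat.mod_eq_of_lt (by simpa using hj)] at hcast
  · intro y _
    exact ⟨((y - x) / e).val, by simpa using ZMod.val_lt _, by simp [he]⟩

/-- Permutations of the vertices of the rooted tree in which a vertex is a word over `α`. That they
are automorphisms of the tree is not imposed: those considered here are so by construction. -/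
abbrev TreePerm (α : Type*) := Perm (List α)

namespace TreePerm

variable {α : Type*}

/-- The wreath recursion: `wreath σ s` applies `σ` to the first letter `x` and `s x` to the rest. -/
def wreath (σ : Perm α) (s : α → TreePerm α) : TreePerm α where
  toFun
    | [] => []
    | x :: w => σ x :: s x w
  invFun
    | [] => []
    | y :: w => σ.symm y :: (s (σ.symm y)).symm w
  left_inv w := by cases w <;> simp
  right_inv w := by cases w <;> simp

@[simp] lemma wreath_nil (σ : Perm α) (s : α → TreePerm α) : wreath σ s [] = [] := rfl

@[simp] lemma wreath_cons (σ : Perm α) (s : α → TreePerm α) (x : α) (w : List α) :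
    wreath σ s (x :: w) = σ x :: s x w := rfl

@[simp] lemma wreath_one_one : wreath (1 : Perm α) 1 = 1 := by
  ext1 w
  cases w <;> rfl

lemma wreath_mul_wreath (σ τ : Perm α) (s u : α → TreePerm α) :
    wreath σ s * wreath τ u = wreath (σ * τ) fun x => s (τ x) * u x := by
  ext1 w
  cases w <;> rfl

lemma wreath_one_pow (s : α → TreePerm α) (k : ℕ) : wreath 1 s ^ k = wreath 1 (s ^ k) := by
  induction k with
  | zero => simp
  | succ k ih => rw [pow_succ, ih, wreath_mul_wreath, pow_succ]; rfl

lemma exists_wreath_one_pow_pow_eq_one [Finite α] {p : ℕ} {s : α → TreePerm α}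
    (h : ∀ x, ∃ k, s x ^ p ^ k = 1) : ∃ k, wreath 1 s ^ p ^ k = 1 := by
  obtain ⟨k, hk⟩ := exists_pow_pow_eq_one_pi h
  exact ⟨k, by rw [wreath_one_pow, hk, wreath_one_one]⟩

section Directed

variable [DecidableEq α]

/-- The function underlying `TreePerm.directed`. -/
def directedFun (z : α) (r : α → TreePerm α) : List α → List α
  | [] => []
  | x :: w => x :: if x = z then directedFun z r w else r x w

lemma directedFun_one (z : α) (w : List α) : directedFun z 1 w = w := by
  induction w with
  | nil => rfl
  | cons x w ih => simp [directedFun, ih]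

lemma directedFun_mul (z : α) (r s : α → TreePerm α) (w : List α) :
    directedFun z (r * s) w = directedFun z r (directedFun z s w) := by
  induction w with
  | nil => rfl
  | cons x w ih => by_cases hx : x = z <;> simp [directedFun, hx, ih]

/-- The automorphism directed along the ray `z, zz, zzz, …`: it fixes this ray and acts by `r x`
below the neighbour `z…zx` of the ray, for `x ≠ z`. The value `r z` is ignored. -/
def directed (z : α) : (α → TreePerm α) →* TreePerm α :=
  MonoidHom.toHomPerm
    { toFun := directedFun z
      map_one' := funext (directedFun_one z)
      map_mul' := fun r s => funext (directedFun_mul z r s) }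

lemma directed_eq_wreath (z : α) (r : α → TreePerm α) :
    directed z r = wreath 1 fun x => if x = z then directed z r else r x := by
  ext1 w
  cases w with
  | nil => rfl
  | cons x w =>
    change (x :: if x = z then directed z r w else r x w) = _
    by_cases hx : x = z <;> simp [hx]

end Directed

/-- The sections at the first-level vertex `x` of those elements of `G` that fix `x` and map the
subtree below `x` to itself. -/
def sections (G : Subgroup (TreePerm α)) (x : α) : Subgroup (TreePerm α) where
  carrier := {g | ∃ h ∈ G, ∀ w, h (x :: w) = x :: g w}
  one_mem' := ⟨1, one_mem G, fun _ => rfl⟩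
  mul_mem' := by
    rintro g g' ⟨h, hG, hg⟩ ⟨h', hG', hg'⟩
    exact ⟨h * h', mul_mem hG hG', fun w => by simp [hg, hg']⟩
  inv_mem' := by
    rintro g ⟨h, hG, hg⟩
    exact ⟨h⁻¹, inv_mem hG, fun w => by rw [Perm.inv_eq_iff_eq, hg]; simp⟩

lemma mem_sections {G : Subgroup (TreePerm α)} {x : α} {g : TreePerm α} :
    g ∈ sections G x ↔ ∃ h ∈ G, ∀ w, h (x :: w) = x :: g w := Iff.rfl

theorem infinite_of_le_sections {G : Subgroup (TreePerm α)} {x : α} (hG : G ≤ sections G x)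
    {k : TreePerm α} (hk : k ∈ G) (hkx : ∀ w, k [x] ≠ x :: w) : Infinite G := by
  choose lift hlift using fun g : G => mem_sections.1 (hG g.2)
  have lift_injective : Function.Injective lift := fun g g' h =>
    Subtype.ext <| Equiv.ext fun w => by simpa [(hlift _).2] using congrArg (· (x :: w)) h
  refine not_finite_iff_infinite.1 fun _ => ?_
  obtain ⟨g, hg⟩ := Finite.surjective_of_injective (f := fun g => (⟨lift g, (hlift g).1⟩ : G))
    (fun g g' h => lift_injective (congrArg Subtype.val h)) ⟨k, hk⟩
  have hgk : lift g = k := congrArg Subtype.val hg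
  exact hkx _ (hgk ▸ (hlift g).2 [])

section Rotate

variable {A : Type*} [AddCommGroup A]

/-- The rotation `x ↦ x + k` of the first letter, for words over an abelian group. -/
def rotate (k : A) : TreePerm A := wreath (Equiv.addRight k) 1

@[simp] lemma rotate_cons (k x : A) (w : List A) : rotate k (x :: w) = (x + k) :: w := rfl

@[simp] lemma rotate_zero : rotate (0 : A) = 1 := by
  ext1 w
  cases w <;> simp [rotate]

lemma rotate_add (k l : A) : rotate (k + l) = rotate k * rotate l := by
  ext1 w
  cases w <;> simp [rotate, add_assoc, add_comm l k]

lemma rotate_pow (k : A) (n : ℕ) : rotate k ^ n = rotate (n • k) := by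
  induction n with
  | zero => simp
  | succ n ih => rw [pow_succ, ih, ← rotate_add, succ_nsmul]

end Rotate

end TreePerm

namespace GGSGroup

open TreePerm

variable {p : ℕ} (ε : ZMod p → ZMod p)

/-- The directed generator `t` of the Grigorchuk–Gupta–Sidki group with defining vector `ε`. It acts
as `t` below the letter `0` and as the rotation by `ε x` below `x ≠ 0`; `ε 0` is ignored. -/
def spine : TreePerm (ZMod p) := directed 0 fun x => rotate (ε x)

lemma spine_pow : spine ε ^ p = 1 := by
  have hpow : (fun x => rotate (ε x)) ^ p = 1 := by
    ext1 x
    simp [rotate_pow]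
  rw [spine, ← map_pow, hpow, map_one]

/-- The letters in which elements of a Grigorchuk–Gupta–Sidki group are spelled. -/
inductive Letter (p : ℕ)
  | rotate (k : ZMod p)
  | spine

namespace Letter

/-- The tree automorphism denoted by a letter. -/
def eval : Letter p → TreePerm (ZMod p)
  | rotate k => TreePerm.rotate k
  | spine => GGSGroup.spine ε

/-- The amount by which a letter rotates the first level. -/
def rotation : Letter p → ZMod p
  | rotate k => k
  | spine => 0

/-- The contribution of a letter to the spine length of a word. -/
def spineLength : Letter p → ℕ
  | rotate _ => 0
  | spine => 1

@[simp] lemma eval_rotate (k : ZMod p) : (rotate k).eval ε = TreePerm.rotate k := rfl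

@[simp] lemma eval_spine : spine.eval ε = GGSGroup.spine ε := rfl

@[simp] lemma rotation_rotate (k : ZMod p) : (rotate k).rotation = k := rfl

@[simp] lemma rotation_spine : (spine : Letter p).rotation = 0 := rfl

@[simp] lemma spineLength_rotate (k : ZMod p) : (rotate k).spineLength = 0 := rfl

@[simp] lemma spineLength_spine : (spine : Letter p).spineLength = 1 := rfl

end Letter

/-- The letter denoting the section of `spine ε` at the first-level vertex `x`. -/
def spineSection (x : ZMod p) : Letter p := if x = 0 then .spine else .rotate (ε x)

lemma rotation_spineSection (x : ZMod p) :
    (spineSection ε x).rotation = if x = 0 then 0 else ε x := by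
  unfold spineSection
  split_ifs <;> rfl

lemma spineLength_spineSection (x : ZMod p) :
    (spineSection ε x).spineLength = if x = 0 then 1 else 0 := by
  unfold spineSection
  split_ifs <;> rfl

lemma spine_eq_wreath : spine ε = wreath 1 fun x => (spineSection ε x).eval ε := by
  rw [spine, directed_eq_wreath]
  congr! 2 with x
  by_cases hx : x = 0 <;> simp [spineSection, hx, spine]

/-- The tree automorphism denoted by a word; the last letter acts first. -/
def eval (w : List (Letter p)) : TreePerm (ZMod p) := (w.map (Letter.eval ε)).prod

/-- The amount by which a word rotates the first level. -/
def rotation (w : List (Letter p)) : ZMod p := (w.map Letter.rotation).sum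

/-- The number of occurrences of `Letter.spine` in a word. -/
def spineLength (w : List (Letter p)) : ℕ := (w.map Letter.spineLength).sum

/-- A word denoting the section, at the first-level vertex `x`, of the automorphism denoted by a
word. -/
@[simp] def sectionAt (x : ZMod p) : List (Letter p) → List (Letter p)
  | [] => []
  | .rotate _ :: w => sectionAt x w
  | .spine :: w => spineSection ε (x + rotation w) :: sectionAt x w

@[simp] lemma eval_nil : eval ε ([] : List (Letter p)) = 1 := rfl

@[simp] lemma eval_cons (l : Letter p) (w : List (Letter p)) :
    eval ε (l :: w) = l.eval ε * eval ε w := List.prod_cons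

@[simp] lemma rotation_nil : rotation ([] : List (Letter p)) = 0 := rfl

@[simp] lemma rotation_cons (l : Letter p) (w : List (Letter p)) :
    rotation (l :: w) = l.rotation + rotation w := List.sum_cons

@[simp] lemma spineLength_nil : spineLength ([] : List (Letter p)) = 0 := rfl

@[simp] lemma spineLength_cons (l : Letter p) (w : List (Letter p)) :
    spineLength (l :: w) = l.spineLength + spineLength w := List.sum_cons

lemma eval_append (u v : List (Letter p)) : eval ε (u ++ v) = eval ε u * eval ε v := by
  simp [eval]

lemma rotation_append (u v : List (Letter p)) : rotation (u ++ v) = rotation u + rotation v := by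
  simp [rotation]

lemma sectionAt_append (x : ZMod p) (u v : List (Letter p)) :
    sectionAt ε x (u ++ v) = sectionAt ε (x + rotation v) u ++ sectionAt ε x v := by
  induction u with
  | nil => rfl
  | cons l u ih => cases l <;> simp [ih, rotation_append, add_comm, add_left_comm]

lemma eval_eq_wreath (w : List (Letter p)) :
    eval ε w = wreath (Equiv.addRight (rotation w)) fun x => eval ε (sectionAt ε x w) := by
  induction w with
  | nil =>
    rw [rotation_nil, Equiv.addRight_zero]
    exact wreath_one_one.symm
  | cons l w ih =>
    cases l with
    | rotate k =>
      rw [eval_cons, ih, Letter.eval_rotate, rotate, wreath_mul_wreath, rotation_cons, add_comm]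
      simp
    | spine =>
      rw [eval_cons, ih, Letter.eval_spine, spine_eq_wreath, wreath_mul_wreath]
      simp

/-- The concatenation of `k` copies of a word. -/
def wordPow (w : List (Letter p)) (k : ℕ) : List (Letter p) := (List.replicate k w).flatten

lemma wordPow_succ (w : List (Letter p)) (k : ℕ) :
    wordPow w (k + 1) = w ++ wordPow w k := rfl

lemma eval_wordPow (w : List (Letter p)) (k : ℕ) : eval ε (wordPow w k) = eval ε w ^ k := by
  simp [wordPow, eval]

lemma rotation_wordPow (w : List (Letter p)) (k : ℕ) :
    rotation (wordPow w k) = k • rotation w := by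
  simp [wordPow, rotation]

lemma sum_map_sectionAt_wordPow {M : Type*} [AddCommMonoid M] (f : Letter p → M) (x : ZMod p)
    (w : List (Letter p)) (k : ℕ) :
    ((sectionAt ε x (wordPow w k)).map f).sum =
      ∑ i ∈ range k, ((sectionAt ε (x + i • rotation w) w).map f).sum := by
  induction k with
  | zero => rfl
  | succ k ih =>
    rw [wordPow_succ, sectionAt_append, rotation_wordPow, List.map_append, List.sum_append, ih,
      sum_range_succ, add_comm]

lemma spineLength_sectionAt_le (x : ZMod p) (w : List (Letter p)) :
    spineLength (sectionAt ε x w) ≤ spineLength w := by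
  induction w with
  | nil => rfl
  | cons l w ih =>
    cases l with
    | rotate k => simpa using ih
    | spine =>
      simp only [sectionAt, spineLength_cons, spineLength_spineSection, Letter.spineLength_spine]
      split_ifs <;> omega

lemma eval_eq_of_spineLength_sectionAt_eq {x : ZMod p} {w : List (Letter p)}
    (hx : spineLength (sectionAt ε x w) = spineLength w) :
    eval ε w = rotate (x + rotation w) * spine ε ^ spineLength w * (rotate x)⁻¹ := by
  induction w with
  | nil => simp
  | cons l w ih =>
    cases l with
    | rotate k =>
      rw [eval_cons, ih (by simpa using hx), rotation_cons, Letter.rotation_rotate,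
        add_left_comm, rotate_add k]
      simp [mul_assoc]
    | spine =>
      have hle := spineLength_sectionAt_le ε x w
      simp only [sectionAt, spineLength_cons, spineLength_spineSection,
        Letter.spineLength_spine] at hx
      split_ifs at hx with hxw
      · rw [eval_cons, ih (by omega)]
        simp [hxw, add_comm 1, pow_succ', mul_assoc]
      · omega

section Finite

variable [NeZero p]

variable {ε} in
lemma sum_rotation_sectionAt (hε : ∑ x with x ≠ 0, ε x = 0) (w : List (Letter p)) :
    ∑ x, rotation (sectionAt ε x w) = 0 := by
  induction w with
  | nil => simp
  | cons l w ih =>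
    cases l with
    | rotate k => exact ih
    | spine =>
      have hspine : ∑ x, (spineSection ε (x + rotation w)).rotation = 0 := by
        rw [← hε, sum_filter]
        refine (Equiv.sum_comp (Equiv.addRight (rotation w)) fun x =>
          (spineSection ε x).rotation).trans ?_
        simp [rotation_spineSection]
      simp only [sectionAt, rotation_cons, sum_add_distrib, hspine, ih, add_zero]

lemma sum_spineLength_sectionAt (w : List (Letter p)) :
    ∑ x, spineLength (sectionAt ε x w) = spineLength w := by
  induction w with
  | nil => simp
  | cons l w ih =>
    cases l with
    | rotate k => simpa using ih
    | spine =>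
      have hspine : ∑ x, (spineSection ε (x + rotation w)).spineLength = 1 := by
        refine (Equiv.sum_comp (Equiv.addRight (rotation w)) fun x =>
          (spineSection ε x).spineLength).trans ?_
        simp [spineLength_spineSection]
      simp only [sectionAt, spineLength_cons, sum_add_distrib, hspine, ih, Letter.spineLength_spine]

lemma exists_eval_pow_pow_eq_one_of_rotation_eq_zero {w : List (Letter p)} (hw : rotation w = 0)
    (ih : ∀ u : List (Letter p), spineLength u < spineLength w → ∃ k, eval ε u ^ p ^ k = 1) :
    ∃ k, eval ε w ^ p ^ k = 1 := by
  by_cases hx : ∃ x, spineLength (sectionAt ε x w) = spineLength w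
  · obtain ⟨x, hx⟩ := hx
    refine ⟨1, ?_⟩
    rw [eval_eq_of_spineLength_sectionAt_eq ε hx, hw, add_zero, pow_one, conj_pow, ← pow_mul,
      mul_comm, pow_mul, spine_pow, one_pow, mul_one, mul_inv_cancel]
  · push Not at hx
    rw [eval_eq_wreath, hw, Equiv.addRight_zero]
    exact exists_wreath_one_pow_pow_eq_one fun x =>
      ih _ ((spineLength_sectionAt_le ε x w).lt_of_ne (hx x))

end Finite

section Prime

variable [Fact p.Prime]

lemma sum_map_sectionAt_wordPow_prime {M : Type*} [AddCommMonoid M] (f : Letter p → M)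
    {w : List (Letter p)} (hw : rotation w ≠ 0) (x : ZMod p) :
    ((sectionAt ε x (wordPow w p)).map f).sum = ∑ y, ((sectionAt ε y w).map f).sum := by
  rw [sum_map_sectionAt_wordPow]
  exact sum_range_add_nsmul_zmod hw x fun y => ((sectionAt ε y w).map f).sum

variable {ε}

lemma exists_eval_pow_pow_eq_one_of_rotation_ne_zero (hε : ∑ x with x ≠ 0, ε x = 0)
    {w : List (Letter p)} (hw : rotation w ≠ 0)
    (h : ∀ u : List (Letter p), rotation u = 0 → spineLength u = spineLength w →
      ∃ k, eval ε u ^ p ^ k = 1) :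
    ∃ k, eval ε w ^ p ^ k = 1 := by
  suffices hp : ∃ k, eval ε (wordPow w p) ^ p ^ k = 1 by
    obtain ⟨k, hk⟩ := hp
    exact ⟨k + 1, by rw [pow_succ', pow_mul, ← eval_wordPow, hk]⟩
  have hrot : rotation (wordPow w p) = 0 := by simp [rotation_wordPow]
  rw [eval_eq_wreath, hrot, Equiv.addRight_zero]
  refine exists_wreath_one_pow_pow_eq_one fun x => h _ ?_ ?_
  · exact (sum_map_sectionAt_wordPow_prime ε Letter.rotation hw x).trans
      (sum_rotation_sectionAt hε w)
  · exact (sum_map_sectionAt_wordPow_prime ε Letter.spineLength hw x).trans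
      (sum_spineLength_sectionAt ε w)

theorem exists_eval_pow_pow_eq_one (hε : ∑ x with x ≠ 0, ε x = 0) (w : List (Letter p)) :
    ∃ k, eval ε w ^ p ^ k = 1 := by
  induction hn : spineLength w using Nat.strong_induction_on generalizing w with
  | _ n ih =>
    have h : ∀ u : List (Letter p), rotation u = 0 → spineLength u = n →
        ∃ k, eval ε u ^ p ^ k = 1 := fun u hu hun =>
      exists_eval_pow_pow_eq_one_of_rotation_eq_zero ε hu fun v hv => ih _ (hun ▸ hv) v rfl
    by_cases hw : rotation w = 0
    · exact h w hw hn
    · exact exists_eval_pow_pow_eq_one_of_rotation_ne_zero hε hw (hn ▸ h)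

end Prime

end GGSGroup

/-- The Grigorchuk–Gupta–Sidki group with defining vector `ε`, generated by the rotation `a` of the
first level and the directed automorphism `t`. For `p = 3` and `ε = id` it is the Gupta–Sidki
`3`-group. -/
def GGSGroup {p : ℕ} (ε : ZMod p → ZMod p) : Subgroup (TreePerm (ZMod p)) :=
  Subgroup.closure {TreePerm.rotate 1, GGSGroup.spine ε}

namespace GGSGroup

open TreePerm

variable {p : ℕ} (ε : ZMod p → ZMod p)

lemma spine_mem : spine ε ∈ GGSGroup ε := Subgroup.subset_closure (by simp)

lemma rotate_mem [NeZero p] (k : ZMod p) : rotate k ∈ GGSGroup ε := by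
  have h : rotate (1 : ZMod p) ^ k.val ∈ GGSGroup ε :=
    pow_mem (Subgroup.subset_closure (by simp)) _
  simpa [rotate_pow] using h

lemma exists_eval_eq [NeZero p] {g : TreePerm (ZMod p)} (hg : g ∈ GGSGroup ε) :
    ∃ w, eval ε w = g := by
  have hfin : ∀ x ∈ ({rotate 1, spine ε} : Set (TreePerm (ZMod p))), IsOfFinOrder x := by
    rintro x (rfl | rfl) <;> refine isOfFinOrder_iff_pow_eq_one.2 ⟨p, NeZero.pos p, ?_⟩
    · simp [rotate_pow]
    · exact spine_pow ε
  rw [GGSGroup, ← Subgroup.mem_toSubmonoid, Subgroup.closure_toSubmonoid_of_isOfFinOrder hfin] at hg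
  induction hg using Submonoid.closure_induction with
  | mem x hx =>
    rcases hx with rfl | rfl
    · exact ⟨[.rotate 1], by simp⟩
    · exact ⟨[.spine], by simp⟩
  | one => exact ⟨[], rfl⟩
  | mul x y _ _ hx hy =>
    obtain ⟨u, rfl⟩ := hx
    obtain ⟨v, rfl⟩ := hy
    exact ⟨u ++ v, eval_append ε u v⟩

lemma spine_mem_sections [NeZero p] (x : ZMod p) : spine ε ∈ sections (GGSGroup ε) x := by
  refine mem_sections.2 ⟨rotate x * spine ε * rotate (-x),
    mul_mem (mul_mem (rotate_mem ε x) (spine_mem ε)) (rotate_mem ε (-x)), fun w => ?_⟩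
  have hspine : spine ε (0 :: w) = 0 :: spine ε w := by
    nth_rw 1 [spine_eq_wreath]
    simp [spineSection]
  simp [hspine]

instance : Group.FG (GGSGroup ε) := Group.closure_finite_fg _

variable [Fact p.Prime] {ε}

theorem isPGroup (hε : ∑ x with x ≠ 0, ε x = 0) : IsPGroup p (GGSGroup ε) := by
  refine isPGroup_iff_pow_pow_eq_one.2 fun g => ?_
  obtain ⟨w, hw⟩ := exists_eval_eq ε g.2
  obtain ⟨k, hk⟩ := exists_eval_pow_pow_eq_one hε w
  exact ⟨k, Subtype.ext (by simpa [hw] using hk)⟩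

lemma rotate_one_mem_sections {x : ZMod p} (hx : x ≠ 0) (hεx : ε x ≠ 0) :
    rotate 1 ∈ sections (GGSGroup ε) x := by
  refine mem_sections.2 ⟨spine ε ^ (ε x)⁻¹.val, pow_mem (spine_mem ε) _, fun w => ?_⟩
  rw [spine_eq_wreath, wreath_one_pow]
  simp [spineSection, hx, hεx, rotate_pow]

theorem infinite {x : ZMod p} (hx : x ≠ 0) (hεx : ε x ≠ 0) : Infinite (GGSGroup ε) := by
  have hle : GGSGroup ε ≤ sections (GGSGroup ε) x := by
    refine (Subgroup.closure_le _).2 ?_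
    rintro g (rfl | rfl)
    · exact rotate_one_mem_sections hx hεx
    · exact spine_mem_sections ε x
  exact infinite_of_le_sections hle (rotate_mem ε 1) (by simp)

end GGSGroup

theorem golod_finitely_generated_infinite_torsion_group_general (p : ℕ) [Fact p.Prime]
    (hp : p ≠ 2) : ∃ (G : Type) (_ : Group G), Group.FG G ∧ Infinite G ∧ IsPGroup p G := by
  have hcard : 1 < Fintype.card (ZMod p) - 1 := by
    have := (Fact.out : p.Prime).two_le
    rw [ZMod.card]
    omega
  have hsum : ∑ x : ZMod p with x ≠ 0, id x = 0 := by
    rw [show ∑ x : ZMod p with x ≠ 0, id x = ∑ x, x from sum_filter_of_ne fun _ _ hx => hx]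
    simpa using FiniteField.sum_pow_lt_card_sub_one (ZMod p) 1 hcard
  exact ⟨GGSGroup (id : ZMod p → ZMod p), inferInstance, inferInstance,
    GGSGroup.infinite one_ne_zero one_ne_zero, GGSGroup.isPGroup hsum⟩

/-- **Golod's theorem**: there exists a finitely generated infinite group in which
every element has finite order. -/
theorem golod_finitely_generated_infinite_torsion_group :
    ∃ (G : Type) (_ : Group G),
      Group.FG G ∧ Infinite G ∧ ∀ g : G, IsOfFinOrder g := by
  obtain ⟨G, hG, hfg, hinf, hpG⟩ :=
    golod_finitely_generated_infinite_torsion_group_general 3 (by norm_num)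
  exact ⟨G, hG, hfg, hinf, hpG.isOfFinOrder three_ne_zero⟩
end

section
/- There exists a group G such that G is finitely generated, infinite, residually finite, and every element of G has finite order. -/
/-- A group is residually finite if the intersection of all its finite-index normal
subgroups is trivial. -/
def IsResiduallyFinite (G : Type*) [Group G] : Prop :=
    (⨅ (H : Subgroup G) (_ : H.Normal) (_ : H.FiniteIndex), H) = ⊥

/-!
The group is Grigorchuk's group, generated by four involutions `a`, `b`, `c`, `d` acting on the
binary rooted tree, whose vertices are the finite binary words. Every level of the tree is a single
orbit. Since the levels are finite, the stabilizers of vertices have finite index, and they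
intersect trivially; since the levels are arbitrarily large, the group is infinite.

For torsion, give the letters weights for which the product of two letters among `b`, `c`, `d`,
which is the identity or the third one, is lighter than the two together. Hence in a word of more
than one letter that is lightest up to conjugation, letters other than `a` are never cyclically
adjacent, so they make up at most half of the word. The weights are also such that the two sections
of such a word, at the vertices of the first level, have smaller total weight than the word itself.
If the word fixes the first level, it has finite order because its sections do, by induction; if it
swaps the two vertices, its square fixes them and has for sections the two products of both
sections.
-/

open MulAction
open Equiv (Perm)

section Group

variable {G : Type*} [Group G]

theorem isResiduallyFinite_iff_residuallyFinite :
    IsResiduallyFinite G ↔ Group.ResiduallyFinite G := by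
  rw [Group.residuallyFinite_iff_forall_finiteIndexNormalSubgroup, IsResiduallyFinite,
    Subgroup.eq_bot_iff_forall]
  simp only [Subgroup.mem_iInf]
  exact forall_congr' fun g ↦ imp_congr_left
    ⟨fun h H ↦ h H.toSubgroup inferInstance inferInstance, fun h H _ _ ↦ h (.ofSubgroup H)⟩

theorem residuallyFinite_of_finite_orbit {X : Type*} [MulAction G X] [FaithfulSMul G X]
    (h : ∀ x : X, (orbit G x).Finite) : Group.ResiduallyFinite G := by
  refine Group.residuallyFinite_iff_forall_finiteIndex.mpr fun g hg ↦
    FaithfulSMul.eq_of_smul_eq_smul fun x : X ↦ ?_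
  have : (stabilizer G x).FiniteIndex := by
    rw [Subgroup.finiteIndex_iff, index_stabilizer]
    exact ((nonempty_orbit x).ncard_pos (h x)).ne'
  rw [mem_stabilizer_iff.mp (hg (stabilizer G x)), one_smul]

theorem isConj_prod_of_isRotated {l l' : List G} (h : l ~r l') : IsConj l.prod l'.prod := by
  obtain ⟨n, rfl⟩ := h
  rw [List.rotate_eq_drop_append_take_mod]
  nth_rewrite 1 [← List.take_append_drop (n % l.length) l]
  simp only [List.prod_append]
  exact isConj_iff.mpr ⟨(l.take (n % l.length)).prod⁻¹, by group⟩

end Group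

section List

variable {α β : Type*}

theorem countP_le_countP_of_forall₂ {p : α → Bool} {q : β → Bool} {l : List α} {l' : List β}
    (h : List.Forall₂ (fun x y ↦ p x → q y) l l') : l.countP p ≤ l'.countP q := by
  induction h with
  | nil => rfl
  | @cons x y _ _ hxy _ ih =>
    simp only [List.countP_cons]
    grind

theorem exists_isRotated_cons_cons_of_length_lt {p : α → Bool} {l : List α} (hl : l.length ≠ 1)
    (hp : l.length < 2 * l.countP p) : ∃ x y t, p x ∧ p y ∧ l ~r x :: y :: t := by
  by_contra! hadj
  have successor_not : List.Forall₂ (fun x y ↦ p x → !p y) l (l.rotate 1) := by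
    refine List.forall₂_iff_get.mpr ⟨by simp, fun i hi hi' hpi ↦ ?_⟩
    have hlength : 1 < (l.rotate i).length := by
      rw [List.length_rotate]
      omega
    have hfirst : (l.rotate i)[0] = l[i] := by
      simp [List.getElem_rotate, Nat.mod_eq_of_lt hi]
    have hsecond : (l.rotate i)[1] = (l.rotate 1)[i] := by
      simp only [List.getElem_rotate, add_comm]
    obtain ⟨x, y, t, hrot⟩ : ∃ x y t, l.rotate i = x :: y :: t := by
      match l.rotate i, hlength with
      | x :: y :: t, _ => exact ⟨x, y, t, rfl⟩
    simp only [hrot, List.getElem_cons_zero, List.getElem_cons_succ] at hfirst hsecond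
    rw [List.get_eq_getElem, ← hfirst] at hpi
    rw [List.get_eq_getElem, ← hsecond, Bool.not_eq_true']
    exact Bool.eq_false_iff.mpr fun hpy ↦ hadj x y t hpi hpy ⟨i, hrot⟩
  have hle : l.countP p ≤ l.countP (!p ·) :=
    (countP_le_countP_of_forall₂ successor_not).trans_eq ((List.rotate_perm l 1).countP_eq _)
  have hsum : l.length = l.countP p + l.countP (!p ·) := by
    simpa using List.length_eq_countP_add_countP p (l := l)
  omega

theorem ncard_setOf_length_eq (α : Type*) [Fintype α] (n : ℕ) :
    {v : List α | v.length = n}.ncard = Fintype.card α ^ n := by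
  rw [← card_vector, ← Nat.card_eq_fintype_card]
  rfl

end List

/-- The wreath recursion `g = σ · (f i)ᵢ` of a permutation `g` of the rooted tree of words over `α`:
it fixes the root, permutes the first level by `σ`, and acts as its section `f i` between the
subtrees below `i` and `σ i`. -/
structure HasSections {α : Type*} (g : Perm (List α)) (σ : Perm α) (f : α → Perm (List α)) :
    Prop where
  apply_nil : g [] = []
  apply_cons (i : α) (v : List α) : g (i :: v) = σ i :: f i v

namespace HasSections

variable {α : Type*} {g h : Perm (List α)} {σ τ : Perm α} {f k : α → Perm (List α)}

theorem one : HasSections (1 : Perm (List α)) 1 1 := ⟨rfl, fun _ _ ↦ rfl⟩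

theorem mul (hg : HasSections g σ f) (hh : HasSections h τ k) :
    HasSections (g * h) (σ * τ) (f ∘ τ * k) where
  apply_nil := by simp [hg.apply_nil, hh.apply_nil]
  apply_cons i v := by simp [hg.apply_cons, hh.apply_cons]

theorem pow (hg : HasSections g 1 f) (n : ℕ) : HasSections (g ^ n) 1 (f ^ n) := by
  induction n with
  | zero => exact one
  | succ n ih => simpa [pow_succ] using ih.mul hg

theorem eq_one (hg : HasSections g 1 1) : g = 1 := by
  ext1 v
  cases v with
  | nil => exact hg.apply_nil
  | cons i v => exact hg.apply_cons i v

theorem isOfFinOrder [Finite α] (hg : HasSections g 1 f) (hf : ∀ i, IsOfFinOrder (f i)) :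
    IsOfFinOrder g := by
  obtain ⟨n, hn, hfn⟩ := isOfFinOrder_iff_pow_eq_one.mp (IsOfFinOrder.pi hf)
  exact isOfFinOrder_iff_pow_eq_one.mpr ⟨n, hn, (hfn ▸ hg.pow n).eq_one⟩

end HasSections

namespace Grigorchuk

/-- The standard generators of the Grigorchuk group, as formal symbols. -/
inductive Letter
  | a | b | c | d
  deriving DecidableEq

open Letter

instance : Fintype Letter := ⟨{a, b, c, d}, fun x ↦ by cases x <;> decide⟩

/-- The permutation of the first level of the binary tree induced by a generator. -/
def rootPerm : Letter → Perm Bool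
  | a => Equiv.boolNot
  | _ => 1

/-- The section of a generator at a vertex of the first level; `none` stands for the identity. -/
def letterSection : Letter → Bool → Option Letter
  | b, false | c, false => some a
  | b, true => some c
  | c, true => some d
  | d, true => some b
  | _, _ => none

/-- The action of the generators on the binary tree, whose vertices are the finite binary words. -/
def act : Letter → List Bool → List Bool
  | _, [] => []
  | x, i :: v => rootPerm x i :: (letterSection x i).elim v (act · v)

theorem act_involutive (x : Letter) : Function.Involutive (act x) := by
  intro v
  induction v generalizing x with
  | nil => rfl
  | cons i v ih => cases x <;> cases i <;> simp [act, rootPerm, letterSection, ih _]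

theorem act_act_of_nodup {x y z : Letter} (h : [a, x, y, z].Nodup) (v : List Bool) :
    act x (act y v) = act z v := by
  induction v generalizing x y z with
  | nil => rfl
  | cons i v ih =>
    cases x <;> cases y <;> cases z <;> first
      | exact absurd h (by decide)
      | cases i
        · simp [act, rootPerm, letterSection, act_involutive a v]
        · -- Taking sections at `true` permutes `b`, `c`, `d` cyclically.
          exact congrArg _ (ih (by decide))

/-- A generator as a permutation of the vertices of the binary tree. -/
def gen (x : Letter) : Perm (List Bool) := (act_involutive x).toPerm

theorem gen_mul_self (x : Letter) : gen x * gen x = 1 := Equiv.ext (act_involutive x)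

theorem gen_mul_gen_of_nodup {x y z : Letter} (h : [a, x, y, z].Nodup) :
    gen x * gen y = gen z := Equiv.ext (act_act_of_nodup h)

theorem isOfFinOrder_gen (x : Letter) : IsOfFinOrder (gen x) :=
  isOfFinOrder_iff_pow_eq_one.mpr ⟨2, two_pos, by rw [pow_two, gen_mul_self]⟩

/-- The permutation represented by a word in the generators. -/
def eval (w : List Letter) : Perm (List Bool) := (w.map gen).prod

@[simp] theorem eval_nil : eval [] = 1 := rfl

@[simp] theorem eval_cons (x : Letter) (w : List Letter) : eval (x :: w) = gen x * eval w :=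
  List.prod_cons

@[simp] theorem eval_append (u w : List Letter) : eval (u ++ w) = eval u * eval w := by
  simp [eval]

theorem isConj_eval_of_isRotated {u w : List Letter} (h : u ~r w) : IsConj (eval u) (eval w) :=
  isConj_prod_of_isRotated (h.map gen)

/-- The permutation of the first level of the binary tree induced by a word. -/
def wordRootPerm (w : List Letter) : Perm Bool := (w.map rootPerm).prod

/-- The section of a word at a vertex of the first level, as a word. -/
def wordSection : List Letter → Bool → List Letter
  | [], _ => []
  | x :: w, i => (letterSection x (wordRootPerm w i)).toList ++ wordSection w i

theorem hasSections_gen (x : Letter) :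
    HasSections (gen x) (rootPerm x) fun i ↦ eval (letterSection x i).toList where
  apply_nil := rfl
  apply_cons i v := by
    change act x (i :: v) = _
    cases h : letterSection x i <;> simp [act, h, gen]

theorem hasSections_eval (w : List Letter) :
    HasSections (eval w) (wordRootPerm w) fun i ↦ eval (wordSection w i) := by
  induction w with
  | nil => exact .one
  | cons x w ih =>
    rw [eval_cons]
    convert (hasSections_gen x).mul ih using 1
    · simp [wordRootPerm]
    · ext1 i
      simp [wordSection]

theorem exists_eval_cons (i : Bool) (w : List Letter) :
    ∃ w', ∀ v, eval w' (i :: v) = i :: eval w v := by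
  induction w with
  | nil => exact ⟨[], fun _ ↦ rfl⟩
  | cons x w ih =>
    have letter_lift : ∃ u, ∀ v, eval u (i :: v) = i :: gen x v :=
      match i, x with
      | false, a => ⟨[b], fun _ ↦ rfl⟩
      | false, b => ⟨[a, d, a], fun _ ↦ rfl⟩
      | false, c => ⟨[a, b, a], fun _ ↦ rfl⟩
      | false, d => ⟨[a, c, a], fun _ ↦ rfl⟩
      | true, a => ⟨[a, b, a], fun _ ↦ rfl⟩
      | true, b => ⟨[d], fun _ ↦ rfl⟩
      | true, c => ⟨[b], fun _ ↦ rfl⟩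
      | true, d => ⟨[c], fun _ ↦ rfl⟩
    obtain ⟨u, hu⟩ := letter_lift
    obtain ⟨w', hw'⟩ := ih
    exact ⟨u ++ w', fun v ↦ by simp [hw', hu]⟩

theorem exists_eval_eq_of_length_eq {u v : List Bool} (h : u.length = v.length) :
    ∃ w, eval w u = v := by
  induction u generalizing v with
  | nil => exact ⟨[], (List.length_eq_zero_iff.mp h.symm).symm⟩
  | cons i u ih =>
    obtain ⟨j, v, rfl⟩ := List.exists_cons_of_length_eq_add_one h.symm
    obtain ⟨w, rfl⟩ := ih (Nat.succ_injective h)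
    obtain ⟨w', hw'⟩ := exists_eval_cons i w
    rcases eq_or_ne j i with rfl | hji
    · exact ⟨w', hw' u⟩
    · refine ⟨a :: w', ?_⟩
      rw [eval_cons, Perm.mul_apply, hw', Bool.eq_not.mpr hji]
      rfl

theorem length_eval_apply (w : List Letter) (v : List Bool) : (eval w v).length = v.length := by
  induction v generalizing w with
  | nil => rw [(hasSections_eval w).apply_nil]
  | cons i v ih => rw [(hasSections_eval w).apply_cons, List.length_cons, List.length_cons, ih]

/-- The Grigorchuk group, as a group of permutations of the vertices of the binary tree. -/
def grigorchukGroup : Subgroup (Perm (List Bool)) := Subgroup.closure (Set.range gen)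

theorem mem_grigorchukGroup_iff {g : Perm (List Bool)} :
    g ∈ grigorchukGroup ↔ ∃ w, eval w = g := by
  rw [grigorchukGroup, ← Subgroup.mem_toSubmonoid,
    Subgroup.closure_toSubmonoid_of_isOfFinOrder (Set.forall_mem_range.mpr isOfFinOrder_gen),
    ← FreeMonoid.mrange_lift]
  exact MonoidHom.mem_mrange.trans <| FreeMonoid.toList.exists_congr fun w ↦ by
    rw [FreeMonoid.lift_apply, eval]

theorem orbit_eq_setOf_length_eq (v : List Bool) :
    orbit grigorchukGroup v = {u | u.length = v.length} := by
  ext u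
  constructor
  · rintro ⟨⟨_, hg⟩, rfl⟩
    obtain ⟨w, rfl⟩ := mem_grigorchukGroup_iff.mp hg
    exact length_eval_apply w v
  · intro hu
    obtain ⟨w, hw⟩ := exists_eval_eq_of_length_eq hu.symm
    exact ⟨⟨eval w, mem_grigorchukGroup_iff.mpr ⟨w, rfl⟩⟩, hw⟩

theorem residuallyFinite_grigorchukGroup : Group.ResiduallyFinite grigorchukGroup :=
  residuallyFinite_of_finite_orbit fun v : List Bool ↦
    orbit_eq_setOf_length_eq v ▸ List.finite_length_eq Bool v.length

theorem infinite_grigorchukGroup : Infinite grigorchukGroup := by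
  refine not_finite_iff_infinite.mp fun _ ↦ ?_
  have two_pow_le (n : ℕ) : 2 ^ n ≤ Nat.card grigorchukGroup := by
    refine Nat.le_of_dvd Nat.card_pos ?_
    have horbit := index_stabilizer grigorchukGroup (List.replicate n false)
    rw [orbit_eq_setOf_length_eq, ncard_setOf_length_eq, List.length_replicate,
      Fintype.card_bool] at horbit
    exact horbit ▸ Subgroup.index_dvd_card _
  exact (two_pow_le _).not_gt Nat.lt_two_pow_self

theorem fg_grigorchukGroup : Group.FG grigorchukGroup := Group.closure_finite_fg (Set.range gen)

/-- Weights of the generators, measuring words in the proof of torsion. Those of `b`, `c`, `d`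
satisfy the strict triangle inequalities, and each of these letters is lighter by exactly 2 than
its two sections together. -/
def weight : Letter → ℕ
  | a => 3
  | b => 4
  | c => 3
  | d => 2

/-- The total weight of the letters of a word. -/
def wordWeight (w : List Letter) : ℕ := (w.map weight).sum

@[simp] theorem wordWeight_nil : wordWeight [] = 0 := rfl

@[simp] theorem wordWeight_cons (x : Letter) (w : List Letter) :
    wordWeight (x :: w) = weight x + wordWeight w :=
  List.sum_cons

@[simp] theorem wordWeight_append (u w : List Letter) :
    wordWeight (u ++ w) = wordWeight u + wordWeight w := by
  simp [wordWeight]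

theorem wordWeight_eq_of_isRotated {u w : List Letter} (h : u ~r w) :
    wordWeight u = wordWeight w :=
  (h.perm.map weight).sum_eq

theorem exists_eval_eq_gen_mul_gen {x y : Letter} (hx : x ≠ a) (hy : y ≠ a) :
    ∃ w, eval w = gen x * gen y ∧ wordWeight w < weight x + weight y := by
  rcases eq_or_ne x y with rfl | hxy
  · exact ⟨[], (gen_mul_self x).symm, by cases x <;> decide⟩
  · obtain ⟨z, hz, hlt⟩ : ∃ z, [a, x, y, z].Nodup ∧ weight z < weight x + weight y := by
      decide +revert
    exact ⟨[z], by simp [gen_mul_gen_of_nodup hz], by simpa⟩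

theorem sum_wordWeight_wordSection (w : List Letter) :
    ∑ i, wordWeight (wordSection w i) + 3 * w.count a =
      wordWeight w + 2 * w.countP (· ≠ a) := by
  induction w with
  | nil => rfl
  | cons x w ih =>
    have letter : ∑ i, wordWeight (letterSection x i).toList + 3 * [x].count a =
        weight x + 2 * [x].countP (· ≠ a) := by
      cases x <;> rfl
    rw [← Equiv.sum_comp (wordRootPerm w)] at letter
    simp only [wordSection, wordWeight_append, wordWeight_cons, Finset.sum_add_distrib]
    rw [← List.singleton_append, List.count_append, List.countP_append]
    omega

theorem sum_wordWeight_wordSection_lt {w : List Letter} (hw : w ≠ [])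
    (h : 2 * w.countP (· ≠ a) ≤ w.length) :
    ∑ i, wordWeight (wordSection w i) < wordWeight w := by
  have hsum := sum_wordWeight_wordSection w
  have hpos := List.length_pos_iff.mpr hw
  have hlength : w.length = w.count a + w.countP (· ≠ a) := by
    simpa [List.count] using List.length_eq_countP_add_countP (· == a) (l := w)
  omega

theorem isOfFinOrder_eval_of_wordSection {w : List Letter}
    (h : ∀ u, wordWeight u ≤ ∑ i, wordWeight (wordSection w i) → IsOfFinOrder (eval u)) :
    IsOfFinOrder (eval w) := by
  have hw := hasSections_eval w
  have fixes_or_swaps (σ : Perm Bool) : σ = 1 ∨ σ * σ = 1 ∧ ∀ i, σ i = !i := by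
    decide +revert
  rcases fixes_or_swaps (wordRootPerm w) with hσ | ⟨hσ, hswap⟩
  · rw [hσ] at hw
    refine hw.isOfFinOrder fun i ↦ h _ ?_
    exact Finset.single_le_sum (f := fun i ↦ wordWeight (wordSection w i)) (by simp)
      (Finset.mem_univ i)
  · have hsquare := hw.mul hw
    rw [hσ] at hsquare
    refine .of_pow (n := 2) (pow_two (eval w) ▸ hsquare.isOfFinOrder fun i ↦ ?_) two_ne_zero
    have := h (wordSection w (!i) ++ wordSection w i) (by cases i <;> simp [add_comm])
    simpa [hswap] using this

theorem isOfFinOrder_eval (w : List Letter) : IsOfFinOrder (eval w) := by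
  induction hn : wordWeight w using Nat.strong_induction_on generalizing w with
  | _ n ih =>
  subst hn
  have ih_lt {u : List Letter} (hu : wordWeight u < wordWeight w) : IsOfFinOrder (eval u) :=
    ih _ hu u rfl
  rcases eq_or_ne w [] with rfl | hnil
  · exact IsOfFinOrder.one
  by_cases hle : 2 * w.countP (· ≠ a) ≤ w.length
  · exact isOfFinOrder_eval_of_wordSection fun u hu ↦
      ih_lt (hu.trans_lt (sum_wordWeight_wordSection_lt hnil hle))
  by_cases hone : w.length = 1
  · obtain ⟨x, rfl⟩ := List.length_eq_one_iff.mp hone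
    simpa using isOfFinOrder_gen x
  obtain ⟨x, y, t, hx, hy, hrot⟩ :=
    exists_isRotated_cons_cons_of_length_lt hone (not_le.mp hle)
  obtain ⟨r, hr, hlt⟩ := exists_eval_eq_gen_mul_gen (of_decide_eq_true hx) (of_decide_eq_true hy)
  have hweight : wordWeight (r ++ t) < wordWeight w := by
    simp only [wordWeight_eq_of_isRotated hrot, wordWeight_append, wordWeight_cons]
    omega
  have heval : eval (x :: y :: t) = eval (r ++ t) := by simp [hr, mul_assoc]
  exact (isConj_eval_of_isRotated hrot).symm.isOfFinOrder (heval ▸ ih_lt hweight)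

theorem isMulTorsion_grigorchukGroup : IsMulTorsion grigorchukGroup := by
  rintro ⟨_, hg⟩
  obtain ⟨w, rfl⟩ := mem_grigorchukGroup_iff.mp hg
  exact (Submonoid.isOfFinOrder_coe (H := grigorchukGroup.toSubmonoid)).mp (isOfFinOrder_eval w)

end Grigorchuk

/-- There exists a finitely generated, infinite, residually finite group in which
every element has finite order. -/
theorem exists_finitely_generated_infinite_residually_finite_torsion_group :
    ∃ (G : Type) (_ : Group G),
      Group.FG G ∧ Infinite G ∧ IsResiduallyFinite G ∧ ∀ g : G, IsOfFinOrder g :=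
  ⟨Grigorchuk.grigorchukGroup, inferInstance, Grigorchuk.fg_grigorchukGroup,
    Grigorchuk.infinite_grigorchukGroup,
    isResiduallyFinite_iff_residuallyFinite.mpr Grigorchuk.residuallyFinite_grigorchukGroup,
    Grigorchuk.isMulTorsion_grigorchukGroup⟩
end

section
/- Let G be a group admitting a finite presentation with generating set X and relation set R, and set d = |X| - |R|. If d > 0, then there exists a surjective group homomorphism from G onto the free abelian group ℤ^d. -/
/-! Passing to the quotient of a group by one element lowers the rank of its abelianization by at
most one. Keep finitely many but at least `d + |R|` of the generators and kill the others: what is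
left of `G` has a finitely generated abelianization of rank at least `d`, which is free modulo
torsion. -/

universe u

theorem exists_linearMap_pi_surjective_of_le_finrank {A M : Type*} [CommRing A] [IsDomain A]
    [IsPrincipalIdealRing A] [AddCommGroup M] [Module A M] [Module.Finite A M] {d : ℕ}
    (hd : d ≤ Module.finrank A M) : ∃ f : M →ₗ[A] (Fin d → A), Function.Surjective f := by
  let T := Submodule.torsion A M
  let b : Module.Basis (Fin (Module.finrank A M)) A (M ⧸ T) :=
    Module.finBasisOfFinrankEq A (M ⧸ T) (finrank_quotient_eq_of_le_torsion le_rfl)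
  refine ⟨LinearMap.funLeft A A (Fin.castLE hd) ∘ₗ b.equivFun.toLinearMap ∘ₗ T.mkQ, ?_⟩
  exact (LinearMap.funLeft_surjective_of_injective A A _ (Fin.castLE_injective hd)).comp
    (b.equivFun.surjective.comp T.mkQ_surjective)

theorem finrank_le_finrank_quotient_span_add_card {A : Type*} {M : Type u} [Ring A]
    [StrongRankCondition A] [HasRankNullity.{u} A] [AddCommGroup M] [Module A M]
    [Module.Finite A M] (S : Finset M) :
    Module.finrank A M ≤ Module.finrank A (M ⧸ Submodule.span A (S : Set M)) + S.card := by
  rw [← (Submodule.span A (S : Set M)).finrank_quotient_add_finrank]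
  gcongr
  exact finrank_span_finset_le_card S

theorem exists_linearMap_pi_surjective_forall_eq_zero {A M : Type*} [CommRing A] [IsDomain A]
    [IsPrincipalIdealRing A] [AddCommGroup M] [Module A M] [Module.Finite A M] (S : Finset M)
    {d : ℕ} (hd : d + S.card ≤ Module.finrank A M) :
    ∃ f : M →ₗ[A] (Fin d → A), Function.Surjective f ∧ ∀ s ∈ S, f s = 0 := by
  let N : Submodule A M := Submodule.span A (S : Set M)
  have hquot : d ≤ Module.finrank A (M ⧸ N) :=
    Nat.le_of_add_le_add_right (hd.trans (finrank_le_finrank_quotient_span_add_card S))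
  obtain ⟨f, hf⟩ := exists_linearMap_pi_surjective_of_le_finrank hquot
  refine ⟨f ∘ₗ N.mkQ, hf.comp N.mkQ_surjective, fun s hs => ?_⟩
  have hs0 : N.mkQ s = 0 := (Submodule.Quotient.mk_eq_zero N).2 (Submodule.subset_span hs)
  rw [LinearMap.comp_apply, hs0, map_zero]

theorem exists_quotient_normalClosure_hom_surjective {H A : Type*} [Group H] [AddCommGroup A]
    [Module.Finite ℤ A] {π : H →* Multiplicative A} (hπ : Function.Surjective π) (S : Finset H)
    {d : ℕ} (hd : d + S.card ≤ Module.finrank ℤ A) :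
    ∃ φ : H ⧸ Subgroup.normalClosure (S : Set H) →* Multiplicative (Fin d → ℤ),
      Function.Surjective φ := by
  classical
  let T : Finset A := S.image fun s => (π s).toAdd
  have hT : d + T.card ≤ Module.finrank ℤ A :=
    (Nat.add_le_add_left Finset.card_image_le d).trans hd
  obtain ⟨f, hf, hfT⟩ := exists_linearMap_pi_surjective_forall_eq_zero T hT
  let ψ : H →* Multiplicative (Fin d → ℤ) := f.toAddMonoidHom.toMultiplicative.comp π
  have hψ : Function.Surjective ψ := hf.comp hπ
  have hker : Subgroup.normalClosure (S : Set H) ≤ ψ.ker :=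
    Subgroup.normalClosure_le_normal fun s hs =>
      congrArg Multiplicative.ofAdd (hfT _ (Finset.mem_image_of_mem _ hs))
  exact ⟨QuotientGroup.lift _ ψ hker, QuotientGroup.lift_surjective_of_surjective _ ψ hψ hker⟩

theorem exists_freeGroup_hom_finsupp_surjective {X Y : Type*} (i : Y ↪ X) :
    ∃ π : FreeGroup X →* Multiplicative (Y →₀ ℤ), Function.Surjective π := by
  let p : FreeAbelianGroup X →+ (Y →₀ ℤ) :=
    (Finsupp.lcomapDomain (R := ℤ) i i.injective).toAddMonoidHom.comp FreeAbelianGroup.toFinsupp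
  have hp : Function.Surjective p :=
    (Finsupp.leftInverse_lcomapDomain_mapDomain (R := ℤ) i i.injective).surjective.comp
      (FreeAbelianGroup.equivFinsupp X).surjective
  -- `FreeAbelianGroup X` unfolds to `Additive (Abelianization (FreeGroup X))`.
  exact ⟨(AddMonoidHom.toMultiplicativeRight p).comp Abelianization.of,
    hp.comp QuotientGroup.mk_surjective⟩

theorem surjects_onto_free_abelian_of_finite_presentation_general {G X : Type*} [Group G]
    {R : Finset (FreeGroup X)} (e : G ≃* PresentedGroup (R : Set (FreeGroup X))) {d : ℕ}
    (hd : ((d + R.card : ℕ) : Cardinal) ≤ Cardinal.mk X) :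
    ∃ φ : G →* Multiplicative (Fin d → ℤ), Function.Surjective φ := by
  obtain ⟨Y, hY⟩ := Cardinal.exists_finset_le_card X _ hd
  obtain ⟨π, hπ⟩ := exists_freeGroup_hom_finsupp_surjective (Function.Embedding.subtype (· ∈ Y))
  have hrank : d + R.card ≤ Module.finrank ℤ (Y →₀ ℤ) := by
    rwa [Module.finrank_finsupp_self, Fintype.card_coe]
  obtain ⟨φ, hφ⟩ := exists_quotient_normalClosure_hom_surjective hπ R hrank
  exact ⟨φ.comp e.toMonoidHom, hφ.comp e.surjective⟩

/-- If a group `G` has a finite presentation `⟨X ∣ R⟩` with `d = |X| - |R| > 0`, then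
`G` surjects onto the free abelian group `ℤ^d`. -/
theorem surjects_onto_free_abelian_of_finite_presentation
    (G : Type*) [Group G] (X : Type) [Fintype X] (R : Finset (FreeGroup X))
    (e : G ≃* PresentedGroup (R : Set (FreeGroup X)))
    (d : ℕ) (hd : (d : ℤ) = (Fintype.card X : ℤ) - R.card) (hpos : 0 < d) :
    ∃ φ : G →* Multiplicative (Fin d → ℤ), Function.Surjective φ := by
  refine surjects_onto_free_abelian_of_finite_presentation_general e ?_
  rw [Cardinal.mk_fintype, Nat.cast_le]
  omega
end

section
/- Let G be a group that can be generated by n elements. Then for every finite presentation of G with generating set X and relation set R, one has |X| - |R| ≤ n. Consequently, the difference |X| - |R| is uniformly bounded from above over all finite presentations of G. -/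
/-!
A homomorphism from a group to an abelian group is determined by its values on any set of normal
generators, while the homomorphisms from the free group `F` on `X` to `ℚ` form a rational vector
space of dimension `|X|`; so normally generating `F` takes at least `|X|` elements. If `G` is the
quotient of `F` by the normal closure of `R`, then lifts to `F` of normal generators of `G`,
together with `R`, normally generate `F`.
-/

open Function Module Subgroup

section AdditiveCharacters

variable {G : Type*} [Group G]

theorem monoidHom_eq_one_of_normalClosure_eq_top {H : Type*} [MulOneClass H] {T : Set G}
    (hT : normalClosure T = ⊤) {f : G →* H} (hf : ∀ t ∈ T, f t = 1) : f = 1 := by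
  rw [← MonoidHom.ker_eq_top_iff, eq_top_iff, ← hT]
  exact normalClosure_le_normal hf

/-- Evaluation, at the elements of `T`, of the homomorphisms from `G` to the additive group of `K`,
as a `K`-linear map. -/
def evalOn (K : Type*) [Semiring K] (T : Set G) : (Additive G →+ K) →ₗ[K] (T → K) where
  toFun f t := f (.ofMul t)
  map_add' _ _ := rfl
  map_smul' _ _ := rfl

theorem evalOn_injective (K : Type*) [Ring K] {T : Set G} (hT : normalClosure T = ⊤) :
    Injective (evalOn K T) := by
  refine (injective_iff_map_eq_zero _).2 fun f hf ↦ ?_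
  refine AddMonoidHom.toMultiplicativeRight.injective ?_
  exact monoidHom_eq_one_of_normalClosure_eq_top hT fun t ht ↦
    congrArg Multiplicative.ofAdd (congrFun hf ⟨t, ht⟩)

theorem finrank_addMonoidHom_le_card_of_normalClosure_eq_top (K : Type*) [Ring K]
    [StrongRankCondition K] {T : Finset G} (hT : normalClosure (T : Set G) = ⊤) :
    finrank K (Additive G →+ K) ≤ T.card := by
  simpa using LinearMap.finrank_le_finrank_of_injective (evalOn_injective K hT)

end AdditiveCharacters

/-- The universal property of the free group on `X`, for homomorphisms to the additive group of `K`,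
as a `K`-linear equivalence. -/
def freeGroupAddMonoidHomEquiv (K X : Type*) [Ring K] :
    (Additive (FreeGroup X) →+ K) ≃ₗ[K] (X → K) where
  __ := AddMonoidHom.toMultiplicativeRight.trans FreeGroup.lift.symm
  map_add' _ _ := rfl
  map_smul' _ _ := rfl

theorem card_le_card_of_normalClosure_eq_top {X : Type*} [Fintype X] {T : Finset (FreeGroup X)}
    (hT : normalClosure (T : Set (FreeGroup X)) = ⊤) : Fintype.card X ≤ T.card :=
  calc
    Fintype.card X = finrank ℚ (Additive (FreeGroup X) →+ ℚ) := by
      rw [(freeGroupAddMonoidHomEquiv ℚ X).finrank_eq, finrank_fintype_fun_eq_card]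
    _ ≤ T.card := finrank_addMonoidHom_le_card_of_normalClosure_eq_top ℚ hT

theorem normalClosure_union_eq_top {F G : Type*} [Group F] [Group G] {π : F →* G}
    (hπ : Surjective π) {R T : Set F} (hR : π.ker ≤ normalClosure R)
    (hT : normalClosure (π '' T) = ⊤) : normalClosure (R ∪ T) = ⊤ := by
  have h_sup : normalClosure T ⊔ π.ker = ⊤ := by
    rw [← comap_map_eq, map_normalClosure T π hπ, hT, comap_top]
  rw [eq_top_iff, ← h_sup, Set.union_comm, normalClosure_union]
  exact sup_le_sup_left hR _

theorem card_generators_sub_card_relations_le_general {G : Type*} [Group G] {n : ℕ} {S : Finset G}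
    (hScard : S.card ≤ n) (hSgen : normalClosure (S : Set G) = ⊤) {X : Type*} [Fintype X]
    {R : Finset (FreeGroup X)} {f : G →* PresentedGroup (R : Set (FreeGroup X))}
    (hf : Surjective f) : (Fintype.card X : ℤ) - R.card ≤ n := by
  classical
  let π := PresentedGroup.mk (R : Set (FreeGroup X))
  have hπ : Surjective π := PresentedGroup.mk_surjective _
  let T : Finset (FreeGroup X) := S.image (surjInv hπ ∘ f)
  have hT : normalClosure (π '' T) = ⊤ := by
    have h_image : π '' T = f '' S := by
      simp only [T, Finset.coe_image, Set.image_image, comp_apply, surjInv_eq]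
    rw [h_image, ← map_normalClosure _ f hf, hSgen, map_top_of_surjective f hf]
  have h_union : normalClosure ((R ∪ T : Finset (FreeGroup X)) : Set (FreeGroup X)) = ⊤ := by
    rw [Finset.coe_union]
    exact normalClosure_union_eq_top hπ (QuotientGroup.ker_mk' _).le hT
  have h_card : Fintype.card X ≤ R.card + n :=
    calc
      Fintype.card X ≤ (R ∪ T).card := card_le_card_of_normalClosure_eq_top h_union
      _ ≤ R.card + T.card := Finset.card_union_le R T
      _ ≤ R.card + n := Nat.add_le_add_left (Finset.card_image_le.trans hScard) _
  lia

/-- If a group `G` can be generated by `n` elements, then for every finite presentation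
`⟨X ∣ R⟩` of `G` we have `|X| - |R| ≤ n`; in particular, the difference `|X| - |R|` is
uniformly bounded from above over all finite presentations of `G`. -/
theorem card_generators_sub_card_relations_le
    (G : Type*) [Group G] (n : ℕ) (S : Finset G) (hScard : S.card ≤ n)
    (hSgen : Subgroup.closure (S : Set G) = ⊤) :
    ∀ (X : Type) (_ : Fintype X) (R : Finset (FreeGroup X)),
      Nonempty (G ≃* PresentedGroup (R : Set (FreeGroup X))) →
        (Fintype.card X : ℤ) - R.card ≤ n := by
  rintro X _ R ⟨e⟩
  have h_normal : normalClosure (S : Set G) = ⊤ := eq_top_mono closure_le_normalClosure hSgen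
  exact card_generators_sub_card_relations_le_general hScard h_normal (f := e) e.surjective
end

section
/- Let F be a group, S a subset of F, and let R be the normal closure of S in F. Let K be a subgroup of F containing R, and let T be a left transversal of K in F (that is, F is the disjoint union of the cosets tK for t ∈ T). Then R equals the normal closure in K of the set { t⁻¹ s t : s ∈ S, t ∈ T }. -/
/-!
If `f⁻¹ = t * k` with `t ∈ T` and `k ∈ K`, then `f * s * f⁻¹ = k⁻¹ * (t⁻¹ * s * t) * k`. Hence the
conjugates in `F` of the elements of `S` are exactly the conjugates in `K` of the elements
`t⁻¹ * s * t`, and the two normal closures are generated by the same subset of `F`.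
-/

section

variable {F : Type*} [Group F] {S T : Set F} {K : Subgroup F}

theorem exists_conj_eq_of_isConj (hT : ∀ f : F, ∃ t ∈ T, t⁻¹ * f ∈ K) {s x : F}
    (hsx : IsConj s x) : ∃ t ∈ T, ∃ k : K, k * (t⁻¹ * s * t) * (k : F)⁻¹ = x := by
  obtain ⟨f, rfl⟩ := isConj_iff.1 hsx
  obtain ⟨t, ht, hk⟩ := hT f⁻¹
  exact ⟨t, ht, ⟨t⁻¹ * f⁻¹, hk⟩⁻¹, by simp [mul_assoc]⟩

theorem conjugatesOfSet_eq_image_subtype_conjugatesOfSet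
    (hSK : Group.conjugatesOfSet S ⊆ K) (hT : ∀ f : F, ∃ t ∈ T, t⁻¹ * f ∈ K) :
    Group.conjugatesOfSet S =
      K.subtype '' Group.conjugatesOfSet
        {k : K | ∃ s ∈ S, ∃ t ∈ T, (k : F) = t⁻¹ * s * t} := by
  have isConj_conj (s t : F) : IsConj s (t⁻¹ * s * t) := isConj_iff.2 ⟨t⁻¹, by rw [inv_inv]⟩
  ext x
  simp only [Set.mem_image, Group.mem_conjugatesOfSet_iff]
  constructor
  · rintro ⟨s, hs, hsx⟩
    obtain ⟨t, ht, k, rfl⟩ := exists_conj_eq_of_isConj hT hsx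
    have hmem : t⁻¹ * s * t ∈ K :=
      hSK (Group.mem_conjugatesOfSet_iff.2 ⟨s, hs, isConj_conj s t⟩)
    let c : K := ⟨t⁻¹ * s * t, hmem⟩
    exact ⟨k * c * k⁻¹, ⟨c, ⟨s, hs, t, ht, rfl⟩, isConj_iff.2 ⟨k, rfl⟩⟩, rfl⟩
  · rintro ⟨y, ⟨c, ⟨s, hs, t, -, hc⟩, hcy⟩, rfl⟩
    have hsc : IsConj s (c : F) := hc.symm ▸ isConj_conj s t
    exact ⟨s, hs, hsc.trans (K.subtype.map_isConj hcy)⟩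

theorem normalClosure_eq_normalClosure_conjugates_in_subgroup_general
    (hRK : Subgroup.normalClosure S ≤ K) (hT : ∀ f : F, ∃ t ∈ T, t⁻¹ * f ∈ K) :
    Subgroup.normalClosure S =
      Subgroup.map K.subtype
        (Subgroup.normalClosure {k : K | ∃ s ∈ S, ∃ t ∈ T, (k : F) = t⁻¹ * s * t}) := by
  have hSK : Group.conjugatesOfSet S ⊆ K :=
    Subgroup.conjugatesOfSet_subset_normalClosure.trans hRK
  rw [Subgroup.normalClosure, Subgroup.normalClosure, MonoidHom.map_closure,
    conjugatesOfSet_eq_image_subtype_conjugatesOfSet hSK hT]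

end

/-- Let `R = ⟪S⟫_F` be the normal closure of a set `S` in a group `F`, let `K` be a
subgroup of `F` containing `R`, and let `T` be a left transversal of `K` in `F`.
Then `R` is the normal closure in `K` of the set `{t⁻¹ s t : s ∈ S, t ∈ T}`. -/
theorem normalClosure_eq_normalClosure_conjugates_in_subgroup
    (F : Type*) [Group F] (S : Set F) (K : Subgroup F)
    (hRK : Subgroup.normalClosure S ≤ K) (T : Set F)
    (hT : ∀ f : F, ∃! t, t ∈ T ∧ t⁻¹ * f ∈ K) :
    Subgroup.normalClosure S =
      Subgroup.map K.subtype
        (Subgroup.normalClosure {k : K | ∃ s ∈ S, ∃ t ∈ T, (k : F) = t⁻¹ * s * t}) :=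
  normalClosure_eq_normalClosure_conjugates_in_subgroup_general hRK fun f => (hT f).exists
end

section
/- Let G be a group, g ∈ G, and N a normal subgroup of G. Let p be an integer with f = g^p ∈ N, and let T be a right transversal of the subgroup ⟨g⟩N in G (that is, G is the disjoint union of the cosets ⟨g⟩N·t for t ∈ T). Then the normal closure of f in G equals the normal closure in N of the set { t⁻¹ f t : t ∈ T }. -/
/-!
If `x = z * n * t` with `z` commuting with `f` and `n ∈ N`, then `z` disappears from `x⁻¹ * f * x`,
and moving `t` past the normal subgroup `N` shows that `x⁻¹ * f * x` is the conjugate of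
`t⁻¹ * f * t` by `t⁻¹ * n⁻¹ * t ∈ N`. Powers of `g` commute with `f = g ^ p`, so a representative
`t` of each coset of `⟨g⟩N` already gives every conjugate of `f` up to conjugation by `N`.
-/

section

open Subgroup

variable {G : Type*} [Group G]

theorem normalClosure_le_iff_forall_conj_mem {s : Set G} {K : Subgroup G} :
    normalClosure s ≤ K ↔ ∀ f ∈ s, ∀ x : G, x⁻¹ * f * x ∈ K := by
  constructor
  · intro h f hf x
    exact h (normalClosure_normal.conj_mem' f (subset_normalClosure hf) x)
  · intro h
    refine (closure_le K).2 fun y hy => ?_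
    obtain ⟨f, hf, hfy⟩ := Group.mem_conjugatesOfSet_iff.1 hy
    obtain ⟨c, rfl⟩ := isConj_iff.1 hfy
    simpa only [inv_inv, SetLike.mem_coe] using h f hf c⁻¹

theorem le_normalizer_map_subtype {H : Subgroup G} (K : Subgroup H) [K.Normal] :
    H ≤ normalizer (K.map H.subtype : Set G) := by
  simpa only [normalizer_eq_top, ← MonoidHom.range_eq_map, range_subtype] using
    le_normalizer_map (H := K) H.subtype

theorem closure_singleton_le_centralizer_zpow (g : G) (p : ℤ) :
    closure {g} ≤ centralizer {g ^ p} := by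
  rw [closure_le, Set.singleton_subset_iff, SetLike.mem_coe, mem_centralizer_singleton_iff]
  exact (Commute.self_zpow g p).eq

theorem exists_inv_mul_mul_eq_conj_of_mul_inv_mem_centralizer_sup
    {N : Subgroup G} [hN : N.Normal] {f x t : G} (h : x * t⁻¹ ∈ centralizer {f} ⊔ N) :
    ∃ m ∈ N, x⁻¹ * f * x = m * (t⁻¹ * f * t) * m⁻¹ := by
  obtain ⟨z, hz, n, hn, hzn⟩ := mem_sup_of_normal_right.1 h
  have hx : x = z * n * t := by rw [hzn, inv_mul_cancel_right]
  have hzf : z⁻¹ * f * z = f := by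
    rw [mul_assoc, inv_mul_eq_iff_eq_mul]
    exact (mem_centralizer_singleton_iff.1 hz).symm
  refine ⟨t⁻¹ * n⁻¹ * t, hN.conj_mem' _ (inv_mem hn) t, ?_⟩
  calc
    x⁻¹ * f * x = t⁻¹ * n⁻¹ * (z⁻¹ * f * z) * n * t := by rw [hx]; group
    _ = t⁻¹ * n⁻¹ * f * n * t := by rw [hzf]
    _ = t⁻¹ * n⁻¹ * t * (t⁻¹ * f * t) * (t⁻¹ * n⁻¹ * t)⁻¹ := by group

theorem map_normalClosure_conj_le_normalClosure (N : Subgroup G) (f : G) (T : Set G) :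
    (normalClosure {k : N | ∃ t ∈ T, (k : G) = t⁻¹ * f * t}).map N.subtype ≤
      normalClosure {f} := by
  refine (map_normalClosure_le _ N.subtype).trans (normalClosure_le_normal ?_)
  rintro _ ⟨k, ⟨t, -, hk⟩, rfl⟩
  rw [N.subtype_apply, hk]
  exact normalClosure_le_iff_forall_conj_mem.1 le_rfl f (Set.mem_singleton f) t

theorem normalClosure_power_eq_normalClosure_conjugates_in_normal_subgroup_general
    {N : Subgroup G} [hN : N.Normal] {f : G} (hfN : f ∈ N) {T : Set G}
    (hT : ∀ x : G, ∃ t ∈ T, x * t⁻¹ ∈ centralizer {f} ⊔ N) :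
    normalClosure {f} =
      (normalClosure {k : N | ∃ t ∈ T, (k : G) = t⁻¹ * f * t}).map N.subtype := by
  refine le_antisymm (normalClosure_le_iff_forall_conj_mem.2 ?_)
    (map_normalClosure_conj_le_normalClosure N f T)
  rintro f rfl x
  obtain ⟨t, ht, hxt⟩ := hT x
  obtain ⟨m, hm, hxm⟩ := exists_inv_mul_mul_eq_conj_of_mul_inv_mem_centralizer_sup hxt
  rw [hxm]
  refine le_normalizer_iff.1 (le_normalizer_map_subtype _) m hm _ ?_
  exact ⟨⟨t⁻¹ * f * t, hN.conj_mem' f hfN t⟩, subset_normalClosure ⟨t, ht, rfl⟩, rfl⟩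

end

/-- Let `N ⊴ G`, let `g ∈ G` and `f = g^p ∈ N`, and let `T` be a right transversal of
the subgroup `⟨g⟩N` in `G`. Then the normal closure of `f` in `G` equals the normal
closure in `N` of the set `{t⁻¹ f t : t ∈ T}`. -/
theorem normalClosure_power_eq_normalClosure_conjugates_in_normal_subgroup
    (G : Type*) [Group G] (g : G) (N : Subgroup G) (hN : N.Normal)
    (p : ℤ) (f : G) (hf : f = g ^ p) (hfN : f ∈ N) (T : Set G)
    (hT : ∀ x : G, ∃! t, t ∈ T ∧ x * t⁻¹ ∈ (Subgroup.closure {g} ⊔ N)) :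
    Subgroup.normalClosure {f} =
      Subgroup.map N.subtype
        (Subgroup.normalClosure {k : N | ∃ t ∈ T, (k : G) = t⁻¹ * f * t}) := by
  subst hf
  exact normalClosure_power_eq_normalClosure_conjugates_in_normal_subgroup_general hfN fun x =>
    (hT x).exists.imp fun _ ⟨ht, hxt⟩ =>
      ⟨ht, sup_le_sup_right (closure_singleton_le_centralizer_zpow g p) N hxt⟩
end

section
/- Let G be a finitely presented group containing a finite-index normal subgroup M that admits a finite presentation with at least two more generators than relations. Then for every natural number n, G contains a normal subgroup of finite index strictly greater than n. -/
/-- A group is finitely presentable if it is isomorphic to a presented group on a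
finite generating set with a finite set of relations. -/
def FinitelyPresentable (G : Type*) [Group G] : Prop :=
  ∃ (X : Type) (_ : Fintype X) (R : Finset (FreeGroup X)),
    Nonempty (G ≃* PresentedGroup (R : Set (FreeGroup X)))

/-!
A presented group with more generators than relators has a nontrivial homomorphism to the
additive group of every division ring `k`: the exponent-sum vectors of the relators do not span
the `k`-vector space on the generators, so some nonzero linear form vanishes on them. Taking
`k = ZMod p` gives subgroups of index `p` for every prime `p`, and these pull back to any group
mapping onto the presented group. In an overgroup of finite index their normal cores still have
finite index, at least `p`.
-/

universe u v

open Cardinal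

theorem exists_linearMap_ne_zero_of_mk_lt_rank {k : Type u} {V : Type v} [DivisionRing k]
    [AddCommGroup V] [Module k V] {s : Set V} (hs : #s < Module.rank k V) :
    ∃ φ : V →ₗ[k] k, φ ≠ 0 ∧ ∀ w ∈ s, φ w = 0 := by
  have h_span : Submodule.span k s ≠ ⊤ := by
    intro h
    have h_rank : Module.rank k V ≤ #s := by
      rw [← rank_top k V, ← h]
      exact rank_span_le s
    exact h_rank.not_gt hs
  obtain ⟨φ, hφ, h_le⟩ := (Submodule.span k s).exists_le_ker_of_lt_top h_span.lt_top
  exact ⟨φ, hφ, fun w hw => h_le (Submodule.subset_span hw)⟩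

section Relators

variable {X : Type u} {R : Set (FreeGroup X)}

/-- The vector of exponent sums of a word, with coefficients in `k`. For `k = ℤ` this is the
abelianization of the free group; the target is written multiplicatively to make it a group
homomorphism. -/
noncomputable def exponentSum (X : Type u) (k : Type v) [Ring k] :
    FreeGroup X →* Multiplicative (X →₀ k) :=
  FreeGroup.lift fun x => .ofAdd (Finsupp.single x 1)

theorem exists_linearMap_exponentSum_eq_zero (k : Type v) [DivisionRing k] (hR : #R < #X) :
    ∃ φ : (X →₀ k) →ₗ[k] k, φ ≠ 0 ∧ ∀ r ∈ R, φ (exponentSum X k r).toAdd = 0 := by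
  have h_image : #((fun r => (exponentSum X k r).toAdd) '' R) < Module.rank k (X →₀ k) := by
    calc
      #((fun r => (exponentSum X k r).toAdd) '' R) ≤ lift.{v} #R := by
        have h_le := mk_image_le_lift (f := fun r => (exponentSum X k r).toAdd) (s := R)
        rwa [lift_id'.{u, v}, lift_umax] at h_le
      _ < lift.{v} #X := lift_lt.mpr hR
      _ = Module.rank k (X →₀ k) := (rank_finsupp_self k X).symm
  obtain ⟨φ, hφ, h_zero⟩ := exists_linearMap_ne_zero_of_mk_lt_rank h_image
  exact ⟨φ, hφ, Set.forall_mem_image.mp h_zero⟩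

theorem exists_presentedGroup_hom_ne_one (k : Type v) [DivisionRing k] (hR : #R < #X) :
    ∃ f : PresentedGroup R →* Multiplicative k, f ≠ 1 := by
  obtain ⟨φ, hφ, h_zero⟩ := exists_linearMap_exponentSum_eq_zero k hR
  let g : X → Multiplicative k := fun x => .ofAdd (φ (Finsupp.single x 1))
  have h_lift : FreeGroup.lift g = φ.toAddMonoidHom.toMultiplicative.comp (exponentSum X k) := by
    ext x
    simp [g, exponentSum]
  have h_rel : ∀ r ∈ R, FreeGroup.lift g r = 1 := fun r hr => by
    rw [h_lift]
    exact congrArg Multiplicative.ofAdd (h_zero r hr)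
  refine ⟨PresentedGroup.toGroup h_rel, fun h_one => hφ ?_⟩
  ext x
  have hx := DFunLike.congr_fun h_one (PresentedGroup.of x)
  rw [PresentedGroup.toGroup.of] at hx
  simpa [g] using hx

theorem exists_presentedGroup_subgroup_index_eq_prime (hR : #R < #X) {p : ℕ} (hp : p.Prime) :
    ∃ H : Subgroup (PresentedGroup R), H.index = p := by
  have : Fact p.Prime := ⟨hp⟩
  obtain ⟨f, hf⟩ := exists_presentedGroup_hom_ne_one (ZMod p) hR
  have h_card : Nat.card (Multiplicative (ZMod p)) = p := by simp
  have : Fact (Nat.card (Multiplicative (ZMod p))).Prime := ⟨h_card.symm ▸ hp⟩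
  have h_range : f.range = ⊤ :=
    f.range.eq_bot_or_eq_top_of_prime_card.resolve_left (mt f.range_eq_bot_iff.mp hf)
  exact ⟨f.ker, by rw [Subgroup.index_ker, h_range, Subgroup.card_top, h_card]⟩

end Relators

theorem exists_normal_finiteIndex_le_index {G : Type*} [Group G] (M : Subgroup G)
    [M.FiniteIndex] (L : Subgroup M) [L.FiniteIndex] :
    ∃ K : Subgroup G, K.Normal ∧ K.FiniteIndex ∧ L.index ≤ K.index := by
  have h_index : (L.map M.subtype).index = L.index * M.index := Subgroup.index_map_subtype L
  have h_fin : (L.map M.subtype).FiniteIndex :=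
    ⟨h_index ▸ mul_ne_zero L.index_ne_zero_of_finite M.index_ne_zero_of_finite⟩
  refine ⟨(L.map M.subtype).normalCore, inferInstance, inferInstance, ?_⟩
  calc
    L.index ≤ L.index * M.index :=
      Nat.le_mul_of_pos_right _ (Nat.pos_of_ne_zero M.index_ne_zero_of_finite)
    _ = (L.map M.subtype).index := h_index.symm
    _ ≤ _ := Subgroup.index_antitone (Subgroup.normalCore_le _)

theorem exists_normal_subgroup_of_large_finite_index_general {G : Type*} [Group G]
    (M : Subgroup G) [M.FiniteIndex] {X : Type u} {R : Set (FreeGroup X)} (hR : #R < #X)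
    (f : M →* PresentedGroup R) (hf : Function.Surjective f) (n : ℕ) :
    ∃ K : Subgroup G, K.Normal ∧ K.FiniteIndex ∧ n < K.index := by
  obtain ⟨p, hnp, hp⟩ := Nat.exists_infinite_primes (n + 1)
  obtain ⟨H, hH⟩ := exists_presentedGroup_subgroup_index_eq_prime hR hp
  have h_index : (H.comap f).index = p := (H.index_comap_of_surjective hf).trans hH
  have : (H.comap f).FiniteIndex := ⟨h_index ▸ hp.ne_zero⟩
  obtain ⟨K, hK, hK_fin, h_le⟩ := exists_normal_finiteIndex_le_index M (H.comap f)
  exact ⟨K, hK, hK_fin, by omega⟩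

/-- If a finitely presented group `G` has a finite-index normal subgroup `M` admitting
a finite presentation with at least two more generators than relations, then `G` has
normal subgroups of arbitrarily large finite index. -/
theorem exists_normal_subgroup_of_large_finite_index
    (G : Type*) [Group G] (hG : FinitelyPresentable G)
    (M : Subgroup G) (hMnormal : M.Normal) (hMindex : M.FiniteIndex)
    (hM : ∃ (X : Type) (_ : Fintype X) (R : Finset (FreeGroup X)),
      Nonempty (M ≃* PresentedGroup (R : Set (FreeGroup X))) ∧
        R.card + 2 ≤ Fintype.card X) :
    ∀ n : ℕ, ∃ K : Subgroup G, K.Normal ∧ K.FiniteIndex ∧ n < K.index := by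
  obtain ⟨X, _, R, ⟨e⟩, hR⟩ := hM
  have h_lt : #(R : Set (FreeGroup X)) < #X := by
    simpa using (by omega : R.card < Fintype.card X)
  exact exists_normal_subgroup_of_large_finite_index_general M h_lt
    e.toMonoidHom e.surjective
end
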